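/- Let X be a Tychonoff space with iw(X) = ℵ₀. If the bitopological function space (C(X), τ_k, τ_p) satisfies S₁(𝒟^k, Γ^p_0) — i.e., for every sequence (D_n) of dense subsets of C_k(X) one can choose f_n ∈ D_n such that the set {f_n : n ∈ ℕ} is infinite, does not contain the constant zero function 0, and every neighborhood of 0 in C_p(X) contains all but finitely many of its elements — then X satisfies S₁(𝒦, Γ): for every sequence (𝒰_n) of open k-covers of X one can choose U_n ∈ 𝒰_n such that {U_n : n ∈ ℕ} is a γ-cover of X. -/

import Mathlib

open Set Filter Topology TopologicalSpace

universe u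

/-- The topology of pointwise convergence on `C(X, ℝ)`. -/
def pointwiseTopology (X : Type u) [TopologicalSpace X] : TopologicalSpace C(X, ℝ) :=
  TopologicalSpace.induced (fun f : C(X, ℝ) => (f : X → ℝ)) Pi.topologicalSpace

/-- `𝒰` is an (open) k-cover of `X`: a nontrivial open cover such that every compact
subset of `X` is contained in some member of `𝒰`. -/
def IsKCover {X : Type u} [TopologicalSpace X] (𝒰 : Set (Set X)) : Prop :=
  (∀ U ∈ 𝒰, IsOpen U) ∧ ⋃₀ 𝒰 = Set.univ ∧ Set.univ ∉ 𝒰 ∧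
    ∀ K : Set X, IsCompact K → ∃ U ∈ 𝒰, K ⊆ U

/-- `𝒰` is an (open) ω-cover of `X`: a nontrivial open cover such that every finite
subset of `X` is contained in some member of `𝒰`. -/
def IsOmegaCover {X : Type u} [TopologicalSpace X] (𝒰 : Set (Set X)) : Prop :=
  (∀ U ∈ 𝒰, IsOpen U) ∧ ⋃₀ 𝒰 = Set.univ ∧ Set.univ ∉ 𝒰 ∧
    ∀ F : Set X, F.Finite → ∃ U ∈ 𝒰, F ⊆ U

/-- `𝒰` is an (open) γ-cover of `X`: an infinite open cover such that for every finite
subset `F` of `X`, all but finitely many members of `𝒰` contain `F`. -/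
def IsGammaCover {X : Type u} [TopologicalSpace X] (𝒰 : Set (Set X)) : Prop :=
  (∀ U ∈ 𝒰, IsOpen U) ∧ ⋃₀ 𝒰 = Set.univ ∧ 𝒰.Infinite ∧
    ∀ F : Set X, F.Finite → {U ∈ 𝒰 | ¬ F ⊆ U}.Finite

/-- `iw(X) = ℵ₀`: there is a second-countable Tychonoff space `Y` and a continuous
bijection (one-to-one and onto map) from `X` to `Y`. -/
def CountableIWeight (X : Type u) [TopologicalSpace X] : Prop :=
  ∃ (Y : Type u) (_ : TopologicalSpace Y), SecondCountableTopology Y ∧ T35Space Y ∧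
    ∃ f : X → Y, Continuous f ∧ Function.Bijective f

/-- The selection principle `S₁(𝒜, ℬ)`. -/
def S1sel {α : Type u} (𝒜 ℬ : Set (Set α)) : Prop :=
  ∀ A : ℕ → Set α, (∀ n, A n ∈ 𝒜) →
    ∃ b : ℕ → α, (∀ n, b n ∈ A n) ∧ Set.range b ∈ ℬ

/-- The selection principle `S_fin(𝒜, ℬ)`. -/
def SfinSel {α : Type u} (𝒜 ℬ : Set (Set α)) : Prop :=
  ∀ A : ℕ → Set α, (∀ n, A n ∈ 𝒜) →
    ∃ B : ℕ → Set α, (∀ n, (B n).Finite ∧ B n ⊆ A n) ∧ (⋃ n, B n) ∈ ℬ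

/-- A strategy for player ONE in the game `G₁(𝒜, ℬ)` (a function from finite sequences
of TWO's moves to sets) is winning if it always plays members of `𝒜` and ONE wins every
play in which he follows it. -/
def IsWinningStrategyOneG1 {α : Type u} (𝒜 ℬ : Set (Set α)) (σ : List α → Set α) : Prop :=
  (∀ h : List α, σ h ∈ 𝒜) ∧
    ∀ b : ℕ → α, (∀ n, b n ∈ σ (List.ofFn fun i : Fin n => b i)) → Set.range b ∉ ℬ

/-- A strategy for player ONE in the game `G_fin(𝒜, ℬ)` (a function from finite sequences
of TWO's moves, which are finite subsets, to sets) is winning if it always plays members of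
`𝒜` and ONE wins every play in which he follows it. -/
def IsWinningStrategyOneGfin {α : Type u} (𝒜 ℬ : Set (Set α)) (σ : List (Set α) → Set α) :
    Prop :=
  (∀ h : List (Set α), σ h ∈ 𝒜) ∧
    ∀ B : ℕ → Set α,
      (∀ n, (B n).Finite ∧ B n ⊆ σ (List.ofFn fun i : Fin n => B i)) → (⋃ n, B n) ∉ ℬ

/-- `A ⊆ C(X, ℝ)` is sequentially dense in `C_p(X)`: every continuous function is the
pointwise limit of a sequence from `A`. -/
def SeqDenseP (X : Type u) [TopologicalSpace X] (A : Set C(X, ℝ)) : Prop :=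
  ∀ g : C(X, ℝ), ∃ s : ℕ → C(X, ℝ), (∀ n, s n ∈ A) ∧
    Filter.Tendsto s Filter.atTop (@nhds _ (pointwiseTopology X) g)

/-- The family `Ω^k_0` of subsets of `C(X, ℝ)` not containing `0` but having `0` in their
closure with respect to the compact-open topology. -/
def OmegaKZero (X : Type u) [TopologicalSpace X] (A : Set C(X, ℝ)) : Prop :=
  (0 : C(X, ℝ)) ∉ A ∧ (0 : C(X, ℝ)) ∈ closure A

/-- The family `Ω^p_0` of subsets of `C(X, ℝ)` not containing `0` but having `0` in their
closure with respect to the topology of pointwise convergence. -/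
def OmegaPZero (X : Type u) [TopologicalSpace X] (A : Set C(X, ℝ)) : Prop :=
  (0 : C(X, ℝ)) ∉ A ∧ (0 : C(X, ℝ)) ∈ @closure _ (pointwiseTopology X) A

/-- The family `Γ^p_0` of infinite subsets `A` of `C(X, ℝ)` with `0 ∉ A` such that every
neighborhood of `0` in the topology of pointwise convergence contains all but finitely
many elements of `A`. -/
def GammaPZero (X : Type u) [TopologicalSpace X] (A : Set C(X, ℝ)) : Prop :=
  A.Infinite ∧ (0 : C(X, ℝ)) ∉ A ∧
    ∀ N ∈ @nhds _ (pointwiseTopology X) (0 : C(X, ℝ)), {f ∈ A | f ∉ N}.Finite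

/-!
Given k-covers `𝒰ₙ`, let `Dₙ` consist of the continuous functions that are constantly `n + 1` off
some member of `𝒰ₙ`. As compact sets can be separated from closed sets, every continuous function
agrees on any compact set with a member of `Dₙ`, so `Dₙ` is dense in `C_k(X)`. Select `fₙ ∈ Dₙ`,
with `fₙ = n + 1` off `Uₙ ∈ 𝒰ₙ`. For a point `x`, the map `n ↦ fₙ` is injective on the indices with
`x ∉ Uₙ`, because then `fₙ(x) = n + 1`, and it sends them outside the neighbourhood
`{f | f(x) < 1}` of `0` in `C_p(X)`. Hence there are only finitely many of them.
-/

section CompactOpen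

variable {X E : Type*} [TopologicalSpace X] [TopologicalSpace E]

theorem exists_continuous_zero_one_of_isCompact_of_isClosed [CompletelyRegularSpace X]
    {K T : Set X} (hK : IsCompact K) (hT : IsClosed T) (hKT : Disjoint K T) :
    ∃ φ : C(X, ℝ), EqOn φ 0 K ∧ EqOn φ 1 T := by
  obtain ⟨S, hS, rfl⟩ := isInducing_stoneCechUnit.isClosed_iff.1 hT
  obtain ⟨φ, hφ0, hφ1, -⟩ := exists_continuous_zero_one_of_isClosed
    (hK.image continuous_stoneCechUnit).isClosed hS (disjoint_image_left.2 hKT)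
  exact ⟨φ.comp ⟨stoneCechUnit, continuous_stoneCechUnit⟩,
    fun x hx ↦ hφ0 (mem_image_of_mem _ hx), fun x hx ↦ hφ1 hx⟩

theorem dense_of_forall_isCompact_exists_eqOn {D : Set C(X, E)}
    (hD : ∀ (g : C(X, E)) (K : Set X), IsCompact K → ∃ f ∈ D, EqOn f g K) : Dense D := by
  intro g
  rw [mem_closure_iff_nhds_basis g.hasBasis_nhds]
  rintro S ⟨hSfin, hS⟩
  obtain ⟨f, hfD, hfg⟩ := hD g (⋃ p ∈ S, p.1)
    (hSfin.isCompact_biUnion fun p hp ↦ (hS p.1 p.2 hp).1)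
  refine ⟨f, hfD, mem_iInter₂.2 fun p hp ↦ ?_⟩
  exact (hS p.1 p.2 hp).2.2.congr (hfg.mono (subset_biUnion_of_mem hp)).symm

/-- The continuous functions that agree with `h` outside some member of `𝒰`. For constant `h`, these
are the dense sets through which k-covers are translated into the function space. -/
def eqOffMember (𝒰 : Set (Set X)) (h : C(X, E)) : Set C(X, E) :=
  {f | ∃ U ∈ 𝒰, EqOn f h Uᶜ}

theorem dense_eqOffMember [CompletelyRegularSpace X] [AddCommGroup E] [Module ℝ E]
    [ContinuousAdd E] [ContinuousSMul ℝ E] {𝒰 : Set (Set X)} (hopen : ∀ U ∈ 𝒰, IsOpen U)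
    (hcompact : ∀ K, IsCompact K → ∃ U ∈ 𝒰, K ⊆ U) (h : C(X, E)) :
    Dense (eqOffMember 𝒰 h) := by
  refine dense_of_forall_isCompact_exists_eqOn fun g K hK ↦ ?_
  obtain ⟨U, hU, hKU⟩ := hcompact K hK
  obtain ⟨φ, hφ0, hφ1⟩ := exists_continuous_zero_one_of_isCompact_of_isClosed hK
    (hopen U hU).isClosed_compl (disjoint_compl_right_iff_subset.2 hKU)
  refine ⟨(1 - φ) • g + φ • h, ⟨U, hU, fun x hx ↦ ?_⟩, fun x hx ↦ ?_⟩
  · simp [hφ1 hx]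
  · simp [hφ0 hx]

end CompactOpen

section Selection

theorem infinite_range_of_eventually_mem {X ι : Type*} [Infinite ι] {U : ι → Set X}
    (hne : ∀ i, U i ≠ univ) (hmem : ∀ x, ∀ᶠ i in cofinite, x ∈ U i) : (range U).Infinite := by
  intro hfin
  have heventually_ne : ∀ V ∈ range U, ∀ᶠ i in cofinite, U i ≠ V := by
    rintro _ ⟨j, rfl⟩
    obtain ⟨x, hx⟩ := (ne_univ_iff_exists_notMem _).1 (hne j)
    exact (hmem x).mono fun i hi hij ↦ hx (hij ▸ hi)
  obtain ⟨i, hi⟩ := (hfin.eventually_all.2 heventually_ne).exists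
  exact hi (U i) (mem_range_self i) rfl

variable {X : Type u} {ι : Type*} [TopologicalSpace X] {U : ι → Set X}

theorem continuous_eval_pointwiseTopology (x : X) :
    Continuous[pointwiseTopology X, inferInstance] fun f : C(X, ℝ) ↦ f x :=
  letI := pointwiseTopology X
  (continuous_apply x).comp continuous_induced_dom

theorem GammaPZero.finite_setOf_apply_notMem {A : Set C(X, ℝ)} (hA : GammaPZero X A) (x : X)
    {V : Set ℝ} (hV : V ∈ 𝓝 0) : {f ∈ A | f x ∉ V}.Finite :=
  letI := pointwiseTopology X
  hA.2.2 _ ((continuous_eval_pointwiseTopology x).continuousAt.preimage_mem_nhds hV)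

theorem GammaPZero.eventually_mem {A : Set C(X, ℝ)} (hA : GammaPZero X A) {f : ι → C(X, ℝ)}
    (hfA : ∀ i, f i ∈ A) {c : ι → ℝ} (hc : Function.Injective c) {V : Set ℝ} (hV : V ∈ 𝓝 0)
    (hcV : ∀ i, c i ∉ V) (hfU : ∀ i, ∀ x ∉ U i, f i x = c i) (x : X) :
    ∀ᶠ i in cofinite, x ∈ U i := by
  refine (hA.finite_setOf_apply_notMem x hV).of_injOn (f := f)
    (fun i hi ↦ ?_) fun i hi j hj hij ↦ ?_
  · exact ⟨hfA i, hfU i x hi ▸ hcV i⟩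
  · apply hc
    rw [← hfU i x hi, ← hfU j x hj, hij]

theorem isGammaCover_range [Infinite ι] (hopen : ∀ i, IsOpen (U i)) (hne : ∀ i, U i ≠ univ)
    (hmem : ∀ x, ∀ᶠ i in cofinite, x ∈ U i) : IsGammaCover (range U) := by
  refine ⟨forall_mem_range.2 hopen, ?_, infinite_range_of_eventually_mem hne hmem, fun F hF ↦ ?_⟩
  · rw [sUnion_range, iUnion_eq_univ_iff]
    exact fun x ↦ (hmem x).exists
  · have hsub : ∀ᶠ i in cofinite, F ⊆ U i := hF.eventually_all.2 fun x _ ↦ hmem x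
    refine (hsub.image U).subset ?_
    rintro _ ⟨⟨i, rfl⟩, hi⟩
    exact mem_image_of_mem U hi

end Selection

theorem statement19_general (X : Type u) [TopologicalSpace X] [CompletelyRegularSpace X]
    (h : S1sel {D : Set C(X, ℝ) | Dense D} {A : Set C(X, ℝ) | GammaPZero X A}) :
    S1sel {𝒰 : Set (Set X) | IsKCover 𝒰} {𝒰 : Set (Set X) | IsGammaCover 𝒰} := by
  intro 𝒰 h𝒰
  choose hopen _ hne hcompact using h𝒰
  obtain ⟨f, hfD, hf⟩ := h (fun n ↦ eqOffMember (𝒰 n) (.const X (n + 1 : ℝ)))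
    fun n ↦ dense_eqOffMember (hopen n) (hcompact n) _
  choose U hU hfU using hfD
  have hinj : Function.Injective fun n : ℕ ↦ (n + 1 : ℝ) :=
    (add_left_injective 1).comp Nat.cast_injective
  have hnotMem (n : ℕ) : (n + 1 : ℝ) ∉ Iio 1 := by simp
  refine ⟨U, hU, isGammaCover_range (fun n ↦ hopen n _ (hU n))
    (fun n hn ↦ hne n (hn ▸ hU n)) fun x ↦ ?_⟩
  exact hf.eventually_mem mem_range_self hinj (Iio_mem_nhds one_pos) hnotMem
    (fun n x hx ↦ hfU n hx) x

theorem statement19 (X : Type u) [TopologicalSpace X] [T35Space X]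
    (hiw : CountableIWeight X)
    (h : S1sel {D : Set C(X, ℝ) | Dense D} {A : Set C(X, ℝ) | GammaPZero X A}) :
    S1sel {𝒰 : Set (Set X) | IsKCover 𝒰} {𝒰 : Set (Set X) | IsGammaCover 𝒰} :=
  statement19_general X h
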